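/- arXiv:1402.3251 — 3 statements merged into one kernel-verified Lean document; each statement's English description precedes it below -/
import Mathlib

section
/- Let G be a connected finite simple graph on n vertices and let 1 ≤ k ≤ n. Then the number of partitions of the vertex set of G into exactly k blocks, each of which induces a connected subgraph of G, is at least the binomial coefficient C(n−1, k−1). -/
open Finset
open scoped Classical

/-- The finset of all partitions of the vertex set of `G` (encoded as finsets of
pairwise disjoint nonempty blocks covering `V`) all of whose blocks induce connected
subgraphs of `G`. -/
noncomputable def connPartitions {V : Type*} [Fintype V] [DecidableEq V]
    (G : SimpleGraph V) : Finset (Finset (Finset V)) :=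
  Finset.univ.filter (fun P =>
    (∀ v : V, ∃! B, B ∈ P ∧ v ∈ B) ∧
    ∀ B ∈ P, B.Nonempty ∧ (SimpleGraph.induce (↑B : Set V) G).Connected)

namespace ConnPart

variable {V : Type*}

/-- The nearest ancestor of `v` (under the parent map `p`) lying in `S`, where `S`
contains the root `r`. -/
noncomputable def rep (r : V) (p : V → V) (d : V → ℕ)
    (hp : ∀ v, v ≠ r → d (p v) < d v) (S : Finset V) (hS : r ∈ S) (v : V) : V :=
  if h : v ∈ S then v else rep r p d hp S hS (p v)
termination_by d v
decreasing_by exact hp v (fun e => h (e ▸ hS))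

section
variable {r : V} {p : V → V} {d : V → ℕ}
    {hp : ∀ v, v ≠ r → d (p v) < d v} {S : Finset V} {hS : r ∈ S}

theorem rep_mem {v : V} (h : v ∈ S) : rep r p d hp S hS v = v := by
  rw [rep, dif_pos h]

theorem rep_not_mem {v : V} (h : v ∉ S) :
    rep r p d hp S hS v = rep r p d hp S hS (p v) := by
  rw [rep, dif_neg h]

theorem rep_spec (n : ℕ) : ∀ v, d v = n →
    rep r p d hp S hS v ∈ S ∧ d (rep r p d hp S hS v) ≤ d v := by
  induction n using Nat.strong_induction_on with
  | _ n ih =>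
    intro v hv
    by_cases h : v ∈ S
    · rw [rep_mem h]; exact ⟨h, le_rfl⟩
    · have h1 : d (p v) < d v := hp v (fun e => h (e ▸ hS))
      have h2 := ih _ (hv ▸ h1) (p v) rfl
      rw [rep_not_mem h]
      exact ⟨h2.1, h2.2.trans h1.le⟩

theorem rep_reach (G : SimpleGraph V) (hadj : ∀ v, v ≠ r → G.Adj v (p v)) (a : V) (ha : a ∈ S)
    (n : ℕ) : ∀ v, d v = n → ∀ hv : rep r p d hp S hS v = a,
    (G.induce {w | rep r p d hp S hS w = a}).Reachable ⟨v, hv⟩ ⟨a, rep_mem ha⟩ := by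
  induction n using Nat.strong_induction_on with
  | _ n ih =>
    intro v hn hv
    by_cases h : v ∈ S
    · have : v = a := by rw [← hv, rep_mem h]
      subst this
      exact SimpleGraph.Reachable.refl _
    · have hr : v ≠ r := fun e => h (e ▸ hS)
      have hv' : rep r p d hp S hS (p v) = a := by rw [← rep_not_mem h]; exact hv
      have h2 := ih _ (hn ▸ hp v hr) (p v) rfl hv'
      refine SimpleGraph.Reachable.trans (SimpleGraph.Adj.reachable ?_) h2
      exact hadj v hr

end

theorem exists_parent (G : SimpleGraph V) (hG : G.Connected) (r : V) :
    ∃ p : V → V, ∀ v, v ≠ r → G.Adj v (p v) ∧ G.dist (p v) r < G.dist v r := by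
  have : ∀ v, ∃ w, v ≠ r → G.Adj v w ∧ G.dist w r < G.dist v r := by
    intro v
    by_cases h : v = r
    · exact ⟨v, fun h' => absurd h h'⟩
    · obtain ⟨q, hq⟩ := hG.exists_walk_length_eq_dist v r
      cases q with
      | nil => exact absurd rfl h
      | cons hvw q =>
        refine ⟨_, fun _ => ⟨hvw, ?_⟩⟩
        have := SimpleGraph.dist_le q
        rw [SimpleGraph.Walk.length_cons] at hq
        omega
  choose p hp using this
  exact ⟨p, hp⟩

end ConnPart

open ConnPart in
/-- For a connected graph `G` on `n` vertices and `1 ≤ k ≤ n`, the number of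
partitions of the vertex set into exactly `k` connected blocks is at least
`C(n-1, k-1)`. -/
theorem card_connPartitions_ge {V : Type*} [Fintype V] [DecidableEq V]
    (G : SimpleGraph V) (hG : G.Connected) (k : ℕ)
    (hk1 : 1 ≤ k) (hk2 : k ≤ Fintype.card V) :
    ((connPartitions G).filter (fun P => P.card = k)).card ≥
      (Fintype.card V - 1).choose (k - 1) := by
  obtain ⟨r⟩ := hG.nonempty
  obtain ⟨p, hpp⟩ := exists_parent G hG r
  have hp : ∀ v, v ≠ r → G.dist (p v) r < G.dist v r := fun v h => (hpp v h).2
  have hadj : ∀ v, v ≠ r → G.Adj v (p v) := fun v h => (hpp v h).1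
  let R : Finset V → V → V := fun S =>
    rep r p (fun v => G.dist v r) hp (insert r S) (mem_insert_self r S)
  have Rmem : ∀ S v, v ∈ insert r S → R S v = v := fun S v h => rep_mem h
  have Rnot : ∀ S v, v ∉ insert r S → R S v = R S (p v) := fun S v h => rep_not_mem h
  have Rin : ∀ S v, R S v ∈ insert r S := fun S v => (rep_spec _ v rfl).1
  have Rd : ∀ S v, G.dist (R S v) r ≤ G.dist v r := fun S v =>
    (rep_spec (d := fun v => G.dist v r) _ v rfl).2
  have Rne : ∀ S v, v ≠ r → (R S v = R S (p v) ↔ v ∉ S) := by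
    intro S v hv
    constructor
    · intro h hS
      rw [Rmem S v (mem_insert_of_mem hS)] at h
      have h1 := Rd S (p v)
      have h2 := hp v hv
      rw [← h] at h1
      omega
    · intro h
      exact Rnot S v (by simp [hv, h])
  let F : Finset V → Finset (Finset V) := fun S =>
    (insert r S).image (fun a => univ.filter (fun w => R S w = a))
  have Fsame : ∀ S v w, R S v = R S w ↔ ∃ B ∈ F S, v ∈ B ∧ w ∈ B := by
    intro S v w
    constructor
    · intro h
      exact ⟨univ.filter (fun x => R S x = R S w), mem_image.2 ⟨_, Rin S w, rfl⟩,
        by simp [h], by simp⟩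
    · rintro ⟨B, hB, hv, hw⟩
      obtain ⟨a, -, rfl⟩ := mem_image.1 hB
      rw [(mem_filter.1 hv).2, (mem_filter.1 hw).2]
  have hcard : (powersetCard (k - 1) (univ.erase r)).card
      = (Fintype.card V - 1).choose (k - 1) := by
    rw [card_powersetCard, card_erase_of_mem (mem_univ r), card_univ]
  rw [ge_iff_le, ← hcard]
  refine card_le_card_of_injOn F ?_ ?_
  · intro S hS
    obtain ⟨hS1, hS2⟩ := mem_powersetCard.1 hS
    have hrS : r ∉ S := fun h => (mem_erase.1 (hS1 h)).1 rfl
    refine mem_filter.2 ⟨mem_filter.2 ⟨mem_univ _, ?_, ?_⟩, ?_⟩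
    · intro v
      refine ⟨univ.filter (fun x => R S x = R S v),
        ⟨mem_image.2 ⟨_, Rin S v, rfl⟩, by simp⟩, ?_⟩
      rintro B ⟨hB, hv⟩
      obtain ⟨a, -, rfl⟩ := mem_image.1 hB
      rw [(mem_filter.1 hv).2]
    · intro B hB
      obtain ⟨a, ha, rfl⟩ := mem_image.1 hB
      refine ⟨⟨a, by simp [Rmem S a ha]⟩, ?_⟩
      have hset : (↑(univ.filter (fun w => R S w = a)) : Set V) = {w | R S w = a} := by
        ext; simp
      rw [hset]
      have hreach := rep_reach (d := fun v => G.dist v r) (hp := hp) (hS := mem_insert_self r S) G hadj a ha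
      rw [SimpleGraph.connected_iff_exists_forall_reachable]
      exact ⟨⟨a, Rmem S a ha⟩, fun w => (hreach _ w.1 rfl w.2).symm⟩
    · rw [card_image_of_injOn, card_insert_of_notMem hrS, hS2]
      · omega
      · intro a ha b hb hab
        have : a ∈ univ.filter (fun w => R S w = b) := by
          have h : univ.filter (fun w => R S w = a) = univ.filter (fun w => R S w = b) := hab
          rw [← h]; simp [Rmem S a ha]
        rw [← (mem_filter.1 this).2, Rmem S a ha]
  · intro S hS T hT hST
    obtain ⟨hS1, -⟩ := mem_powersetCard.1 hS
    obtain ⟨hT1, -⟩ := mem_powersetCard.1 hT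
    ext v
    by_cases hv : v = r
    · subst hv
      exact ⟨fun h => absurd rfl (mem_erase.1 (hS1 h)).1,
        fun h => absurd rfl (mem_erase.1 (hT1 h)).1⟩
    · have h1 := Rne S v hv
      have h2 := Rne T v hv
      rw [Fsame] at h1 h2
      have hST' : F S = F T := hST
      rw [hST'] at h1
      exact not_iff_not.1 (h1.symm.trans h2)
end

section
/- Let G be a connected finite simple 3-regular graph on n vertices (so that its edge set has cardinality 3n/2), and let β ≥ (ln 2)/2. Then Z_G(β) ≥ 2·(2·sinh β)^{3n/2} − 2·e^{−(3/2)βn}·(e^{2β} − 1)^{n−1} + 2·e^{−(3/2)βn}·(e^{2β} + 1)^{n−1}. -/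
open Finset

/-- The spin value associated to a Boolean: `true ↦ +1`, `false ↦ -1`. -/
noncomputable def spin (b : Bool) : ℝ := if b then 1 else -1

/-- The Ising interaction energy `Σ_{{i,j} ∈ E} σ(i)σ(j)` of a spin configuration
`σ : V → {±1}` (encoded via `Bool`) on a finite simple graph `G`. -/
noncomputable def isingEnergy {V : Type*} [Fintype V] [DecidableEq V]
    (G : SimpleGraph V) [DecidableRel G.Adj] (σ : V → Bool) : ℝ :=
  ∑ e ∈ G.edgeFinset,
    Sym2.lift ⟨fun i j => spin (σ i) * spin (σ j), fun i j => by ring⟩ e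

/-- The Ising partition function `Z_G(β) = Σ_σ exp(β Σ_{{i,j} ∈ E} σ(i)σ(j))`. -/
noncomputable def isingZ {V : Type*} [Fintype V] [DecidableEq V]
    (G : SimpleGraph V) [DecidableRel G.Adj] (β : ℝ) : ℝ :=
  ∑ σ : V → Bool, Real.exp (β * isingEnergy G σ)


/-- Agreement indicator of an edge. -/
def agr {V : Type*} (σ : V → Bool) (e : Sym2 V) : Bool :=
  Sym2.lift ⟨fun i j => σ i == σ j, fun i j => Bool.beq_comm⟩ e

/-- Edge weight. -/
noncomputable def wt (p : ℝ) (b : Bool) : ℝ := if b then 1 + p else 1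

lemma edge_exp {V : Type*} (β : ℝ) (σ : V → Bool) (e : Sym2 V) :
    Real.exp (β * Sym2.lift ⟨fun i j => spin (σ i) * spin (σ j), fun i j => by ring⟩ e)
      = Real.exp (-β) * wt (Real.exp (2 * β) - 1) (agr σ e) := by
  induction e with
  | _ i j =>
    have h : Real.exp β = Real.exp (-β) * Real.exp (2 * β) := by
      rw [← Real.exp_add]; congr 1; ring
    simp only [Sym2.lift_mk, agr, wt, spin]
    rcases Bool.eq_false_or_eq_true (σ i) with h1 | h1 <;>
      rcases Bool.eq_false_or_eq_true (σ j) with h2 | h2 <;> simp [h, h1, h2]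

lemma isingZ_eq {V : Type*} [Fintype V] [DecidableEq V]
    (G : SimpleGraph V) [DecidableRel G.Adj] (β : ℝ) :
    isingZ G β = Real.exp (-β) ^ G.edgeFinset.card *
      ∑ σ : V → Bool, ∏ e ∈ G.edgeFinset, wt (Real.exp (2 * β) - 1) (agr σ e) := by
  unfold isingZ isingEnergy
  rw [Finset.mul_sum]
  refine Finset.sum_congr rfl fun σ _ => ?_
  rw [Finset.mul_sum, Real.exp_sum]
  simp_rw [edge_exp]
  rw [Finset.prod_mul_distrib, Finset.prod_const]

lemma tree_sum {V : Type*} [Fintype V] [DecidableEq V]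
    (T : SimpleGraph V) [DecidableRel T.Adj] (hT : T.IsTree) (p : ℝ) :
    ∑ σ : V → Bool, ∏ e ∈ T.edgeFinset, wt p (agr σ e)
      = 2 * (p + 2) ^ (Fintype.card V - 1) := by
  obtain ⟨r⟩ := hT.1.nonempty
  have hc := hT.card_edgeFinset
  let F : (V → Bool) → Bool × (T.edgeFinset → Bool) := fun σ => (σ r, fun e => agr σ e.1)
  have hinj : Function.Injective F := by
    intro σ τ h
    have h1 : σ r = τ r := congrArg Prod.fst h
    have h2 : ∀ e : T.edgeFinset, agr σ e.1 = agr τ e.1 := fun e => congrFun (congrArg Prod.snd h) e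
    have h3 : ∀ i j, T.Adj i j → σ i = τ i → σ j = τ j := by
      intro i j hij hi
      have := h2 ⟨s(i, j), by simpa using hij⟩
      simp only [agr, Sym2.lift_mk, hi] at this
      revert this
      cases τ i <;> cases σ j <;> cases τ j <;> simp
    have h4 : ∀ i j, T.Walk i j → σ i = τ i → σ j = τ j := by
      intro i j w
      induction w with
      | nil => exact id
      | cons hadj _ ih => exact fun hi => ih (h3 _ _ hadj hi)
    funext v
    obtain ⟨w⟩ := hT.1.preconnected r v
    exact h4 r v w h1
  have hbij : Function.Bijective F := by
    rw [Fintype.bijective_iff_injective_and_card]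
    refine ⟨hinj, ?_⟩
    simp only [Fintype.card_fun, Fintype.card_prod, Fintype.card_bool, Fintype.card_coe]
    rw [← hc, pow_succ]; ring
  have e1 : ∑ σ : V → Bool, ∏ e ∈ T.edgeFinset, wt p (agr σ e)
      = ∑ x : Bool × (T.edgeFinset → Bool), ∏ e, wt p (x.2 e) := by
    refine Fintype.sum_bijective F hbij _ _ fun σ => ?_
    rw [← Finset.prod_coe_sort]
  have e2 : ∑ f : T.edgeFinset → Bool, ∏ e, wt p (f e) = ∏ _e : T.edgeFinset, ∑ b : Bool, wt p b :=
    (Fintype.prod_sum (fun (_ : T.edgeFinset) b => wt p b)).symm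
  rw [e1, Fintype.sum_prod_type]
  simp only [e2]
  have e3 : T.edgeFinset.card = Fintype.card V - 1 := by omega
  simp [wt, -Set.toFinset_card, ← e3]
  congr 1; ring

theorem isingZ_cubic_lower_bound {V : Type*} [Fintype V] [DecidableEq V]
    (G : SimpleGraph V) [DecidableRel G.Adj] (hG : G.Connected)
    (hreg : ∀ v : V, G.degree v = 3) (β : ℝ) (hβ : Real.log 2 / 2 ≤ β) :
    isingZ G β ≥
      2 * (2 * Real.sinh β) ^ ((3 * (Fintype.card V : ℝ)) / 2)
        - 2 * Real.exp (-(3 / 2) * β * Fintype.card V)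
            * (Real.exp (2 * β) - 1) ^ (Fintype.card V - 1)
        + 2 * Real.exp (-(3 / 2) * β * Fintype.card V)
            * (Real.exp (2 * β) + 1) ^ (Fintype.card V - 1) := by
  classical
  have hβ0 : 0 ≤ β := le_trans (by have := Real.log_nonneg (x := 2) (by norm_num); linarith) hβ
  obtain ⟨r⟩ := hG.nonempty
  have hn : 0 < Fintype.card V := Fintype.card_pos_iff.mpr ⟨r⟩
  have hm : 3 * Fintype.card V = 2 * G.edgeFinset.card := by
    rw [← G.sum_degrees_eq_twice_card_edges]; simp [hreg, mul_comm]
  have hmR : 3 * (Fintype.card V : ℝ) = 2 * (G.edgeFinset.card : ℝ) := by exact_mod_cast hm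
  obtain ⟨T, hTG, hT⟩ := hG.exists_isTree_le
  have hTc := hT.card_edgeFinset
  have hsub : T.edgeFinset ⊆ G.edgeFinset := SimpleGraph.edgeFinset_mono hTG
  have hsinh : 2 * Real.sinh β = Real.exp (-β) * (Real.exp (2 * β) - 1) := by
    rw [Real.sinh_eq, mul_sub, ← Real.exp_add, show -β + 2 * β = β by ring]; ring
  have hexp : Real.exp (-(3 / 2) * β * Fintype.card V) = Real.exp (-β) ^ G.edgeFinset.card := by
    rw [← Real.exp_nat_mul]; congr 1; linear_combination (-β / 2) * hmR
  rw [isingZ_eq, hexp, hsinh, show 3 * (Fintype.card V : ℝ) / 2 = (G.edgeFinset.card : ℝ) by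
    linarith, Real.rpow_natCast, mul_pow]
  have hp0 : 0 ≤ Real.exp (2 * β) - 1 := by
    have := Real.one_le_exp (x := 2 * β) (by linarith); linarith
  rw [show Real.exp (2 * β) + 1 = (Real.exp (2 * β) - 1) + 2 by ring]
  generalize Real.exp (2 * β) - 1 = p at hp0 ⊢
  have hwt : ∀ b, 1 ≤ wt p b := by intro b; cases b <;> simp [wt, hp0]
  have htree := tree_sum T hT p
  have hmono : ∀ σ : V → Bool, ∏ e ∈ T.edgeFinset, wt p (agr σ e)
      ≤ ∏ e ∈ G.edgeFinset, wt p (agr σ e) := fun σ =>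
    Finset.prod_le_prod_of_subset_of_one_le hsub (fun _ _ => zero_le_one.trans (hwt _))
      fun _ _ _ => hwt _
  have hconst : ∀ b : Bool, ∏ e ∈ T.edgeFinset, wt p (agr (fun _ : V => b) e) + p ^ G.edgeFinset.card
      ≤ ∏ e ∈ G.edgeFinset, wt p (agr (fun _ : V => b) e) := by
    intro b
    have ha : ∀ e : Sym2 V, wt p (agr (fun _ : V => b) e) = 1 + p := by
      intro e
      induction e with
      | _ i j => simp [agr, wt]
    simp only [ha, Finset.prod_const]
    obtain ⟨k, hk⟩ : ∃ k, G.edgeFinset.card = k + 1 := ⟨G.edgeFinset.card - 1, by omega⟩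
    have hle : T.edgeFinset.card ≤ k := by omega
    rw [hk, pow_succ, pow_succ, mul_add, mul_one]
    have h1 : (1 + p) ^ T.edgeFinset.card ≤ (1 + p) ^ k := pow_le_pow_right₀ (by linarith) hle
    have h2 : p ^ k ≤ (1 + p) ^ k := pow_le_pow_left₀ hp0 (by linarith) k
    have h3 := mul_le_mul_of_nonneg_right h2 hp0
    linarith
  have key : ∑ σ : V → Bool, ∏ e ∈ T.edgeFinset, wt p (agr σ e) + 2 * p ^ G.edgeFinset.card
      ≤ ∑ σ : V → Bool, ∏ e ∈ G.edgeFinset, wt p (agr σ e) := by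
    let c : Bool → (V → Bool) := fun b _ => b
    have hc : Function.Injective c := fun a b h => congrFun h r
    have hs : ∑ σ : V → Bool, (if σ ∈ Finset.univ.image c then p ^ G.edgeFinset.card else 0)
        = 2 * p ^ G.edgeFinset.card := by
      rw [← Finset.sum_filter, Finset.filter_mem_eq_inter, Finset.univ_inter, Finset.sum_const,
        Finset.card_image_of_injective _ hc]
      simp
    rw [← hs, ← Finset.sum_add_distrib]
    refine Finset.sum_le_sum fun σ _ => ?_
    split_ifs with h
    · obtain ⟨b, -, rfl⟩ := Finset.mem_image.mp h
      exact hconst b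
    · simpa using hmono σ
  have hE : 0 ≤ Real.exp (-β) ^ G.edgeFinset.card := by positivity
  rw [htree] at key
  have h1 := mul_le_mul_of_nonneg_left key hE
  have h2 : 0 ≤ Real.exp (-β) ^ G.edgeFinset.card * p ^ (Fintype.card V - 1) := by positivity
  linarith
end

section
/- For every real μ > ln 2, the limit lim_{N→∞} (1/N)·ln Z_N(μ) exists and equals ln Λ(μ), where Λ(μ) = ((1 − √(1 − 4e^{−2μ})) / (2e^{−μ}))². -/
open scoped ENNReal

/-- The transfer-matrix weight `u(n, n') = C(n + n' - 1, n - 1) e^{-μ(n + n')}` of pure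
causal dynamical triangulations, as an extended nonnegative real. -/
noncomputable def cdtWeight (μ : ℝ) (n n' : ℕ+) : ℝ≥0∞ :=
  ENNReal.ofReal
    ((((n : ℕ) + (n' : ℕ) - 1).choose ((n : ℕ) - 1) : ℝ) *
      Real.exp (-μ * ((n : ℕ) + (n' : ℕ))))

/-- The pure CDT transfer-matrix partition function
`Z_N(μ) = Σ_{(n_1, …, n_N) ∈ (ℕ≥1)^N} Π_i C(n_i + n_{i+1} - 1, n_i - 1) e^{-μ(n_i + n_{i+1})}`,
with cyclic indices (the successor of `i` taken via the cyclic rotation `finRotate`), as a sum in the extended nonnegative reals. -/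
noncomputable def cdtZ (N : ℕ) (μ : ℝ) : ℝ≥0∞ :=
  ∑' f : Fin N → ℕ+, ∏ i : Fin N, cdtWeight μ (f i) (f (finRotate N i))

/-- `Λ(μ) = ((1 - √(1 - 4 e^{-2μ})) / (2 e^{-μ}))²`. -/
noncomputable def cdtLambda (μ : ℝ) : ℝ :=
  ((1 - Real.sqrt (1 - 4 * Real.exp (-2 * μ))) / (2 * Real.exp (-μ))) ^ 2

/-- Powers of the transfer matrix. -/
noncomputable def cdtP (μ : ℝ) : ℕ → ℕ+ → ℕ+ → ℝ≥0∞
  | 0, n, m => if m = n then 1 else 0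
  | k + 1, n, m => ∑' l : ℕ+, cdtWeight μ n l * cdtP μ k l m

lemma cdt_path (μ : ℝ) (k : ℕ) : ∀ G : ℕ+ → ℕ+ → ℝ≥0∞,
    ∑' f : Fin (k + 1) → ℕ+, (∏ i : Fin k, cdtWeight μ (f i.castSucc) (f i.succ)) *
      G (f 0) (f (Fin.last k)) = ∑' n : ℕ+, ∑' m : ℕ+, cdtP μ k n m * G n m := by
  induction k with
  | zero =>
    intro G
    rw [← (Equiv.funUnique (Fin 1) ℕ+).symm.tsum_eq]
    refine tsum_congr fun n => ?_
    rw [tsum_eq_single n]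
    · simp [cdtP]
    · intro m hm
      simp [cdtP, hm]
  | succ k ih =>
    intro G
    rw [← (Fin.consEquiv (fun _ : Fin (k + 2) => ℕ+)).tsum_eq, ENNReal.tsum_prod']
    refine tsum_congr fun n => ?_
    have h1 : ∀ f : Fin (k + 1) → ℕ+,
        (∏ i : Fin (k + 1), cdtWeight μ
          ((Fin.consEquiv (fun _ : Fin (k + 2) => ℕ+)) (n, f) i.castSucc)
          ((Fin.consEquiv (fun _ : Fin (k + 2) => ℕ+)) (n, f) i.succ)) *
        G ((Fin.consEquiv (fun _ : Fin (k + 2) => ℕ+)) (n, f) 0)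
          ((Fin.consEquiv (fun _ : Fin (k + 2) => ℕ+)) (n, f) (Fin.last (k + 1)))
        = (∏ i : Fin k, cdtWeight μ (f i.castSucc) (f i.succ)) *
          (fun l m => cdtWeight μ n l * G n m) (f 0) (f (Fin.last k)) := by
      intro f
      rw [Fin.prod_univ_succ]
      simp only [Fin.consEquiv_apply, Fin.castSucc_zero, Fin.cons_zero, Fin.cons_succ,
        ← Fin.succ_last, ← Fin.succ_castSucc]
      ring
    simp only [h1]
    rw [ih (fun l m => cdtWeight μ n l * G n m), ENNReal.tsum_comm]
    refine tsum_congr fun m => ?_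
    simp only [cdtP]
    rw [← ENNReal.tsum_mul_right]
    refine tsum_congr fun l => ?_
    ring

lemma cdtZ_succ (μ : ℝ) (k : ℕ) :
    cdtZ (k + 1) μ = ∑' n : ℕ+, ∑' m : ℕ+, cdtP μ k n m * cdtWeight μ m n := by
  rw [← cdt_path μ k (fun n m => cdtWeight μ m n)]
  unfold cdtZ
  refine tsum_congr fun f => ?_
  rw [Fin.prod_univ_castSucc]
  simp [Fin.coeSucc_eq_succ]

/-- Explicit orbits of the Moebius map. -/
noncomputable def cdtR (a c A : ℝ) : ℝ := (a - c * A) / (1 - c * a * A)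

lemma cdt_den {a c A : ℝ} (ha : 0 < a) (ha1 : a < 1) (hc : -1 ≤ c) (hc' : c ≤ a)
    (hA : 0 < A) (hA1 : A ≤ 1) : 0 < 1 - c * a * A := by
  have h1 : 0 < a * A := by positivity
  have h2 : a * A < 1 := by nlinarith
  nlinarith

lemma cdtR_mem {a c A : ℝ} (ha : 0 < a) (ha1 : a < 1) (hc : -1 ≤ c) (hc' : c ≤ a)
    (hA : 0 < A) (hA1 : A ≤ 1) : 0 ≤ cdtR a c A ∧ cdtR a c A ≤ 1 := by
  have hd := cdt_den ha ha1 hc hc' hA hA1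
  unfold cdtR
  refine ⟨div_nonneg ?_ hd.le, ?_⟩
  · nlinarith
  · rw [div_le_one hd]
    have : 0 ≤ (1 - a) * (1 + c * A) := mul_nonneg (by linarith) (by nlinarith)
    nlinarith

lemma cdtR_anti {a c A : ℝ} (ha : 0 < a) (ha1 : a < 1) (hc : -1 ≤ c) (hc' : c ≤ a)
    (hA : 0 < A) (hA1 : A ≤ 1) : cdtR a a A ≤ cdtR a c A := by
  have hd := cdt_den ha ha1 hc hc' hA hA1
  have hd' := cdt_den ha ha1 (by linarith) le_rfl hA hA1
  unfold cdtR
  rw [div_le_div_iff₀ hd' hd]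
  have : 0 ≤ (a - c) * A * (1 - a ^ 2) :=
    mul_nonneg (mul_nonneg (by linarith) hA.le) (by nlinarith)
  nlinarith

lemma cdtR_step {a c A g : ℝ} (ha : 0 < a) (ha1 : a < 1) (hc : -1 ≤ c) (hc' : c ≤ a)
    (hA : 0 < A) (hA1 : A ≤ 1) (hg : g = a / (1 + a ^ 2)) :
    g * (1 / (1 - g * cdtR a c A)) = cdtR a c (a ^ 2 * A) := by
  have hd := cdt_den ha ha1 hc hc' hA hA1
  have hd2 : 0 < 1 - c * a * (a ^ 2 * A) :=
    cdt_den ha ha1 hc hc' (by positivity) (by nlinarith)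
  have h3 : 0 < 1 + a ^ 2 := by positivity
  have key : 1 - g * cdtR a c A =
      (1 - c * a * (a ^ 2 * A)) / ((1 + a ^ 2) * (1 - c * a * A)) := by
    subst hg
    unfold cdtR
    rw [div_mul_div_comm, one_sub_div (by positivity)]
    congr 1
    ring
  rw [key, hg]
  unfold cdtR
  rw [one_div_div, div_mul_div_comm, div_eq_div_iff (by positivity) hd2.ne']
  ring

lemma cdt_hasSum {g x y : ℝ} (hg : 0 < g) (hg1 : g < 1) (hx : 0 ≤ x) (hx1 : x ≤ 1)
    (hy : 0 ≤ y) (hy1 : y ≤ 1) (n : ℕ+) :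
    HasSum (fun l : ℕ+ => (((n : ℕ) + (l : ℕ) - 1).choose ((n : ℕ) - 1) : ℝ) *
      g ^ ((n : ℕ) + (l : ℕ)) * (x ^ (l : ℕ) - y ^ (l : ℕ)))
      ((g * (1 / (1 - g * x))) ^ (n : ℕ) - (g * (1 / (1 - g * y))) ^ (n : ℕ)) := by
  obtain ⟨k, hk⟩ : ∃ k, (n : ℕ) = k + 1 := ⟨n - 1, by have := n.pos; omega⟩
  have base : ∀ z : ℝ, 0 ≤ z → z ≤ 1 →
      HasSum (fun l : ℕ => ((l + k).choose k : ℝ) * (g * z) ^ l) (1 / (1 - g * z) ^ (k + 1)) := by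
    intro z hz hz1
    apply hasSum_choose_mul_geometric_of_norm_lt_one
    rw [Real.norm_of_nonneg (by positivity)]
    nlinarith
  have h := ((base x hx hx1).sub (base y hy hy1)).mul_left (g ^ (n : ℕ))
  have h' := (Function.Injective.hasSum_iff (g := fun l : ℕ+ => (l : ℕ)) PNat.coe_injective
    (f := fun l : ℕ => g ^ (n : ℕ) * (((l + k).choose k : ℝ) * (g * x) ^ l -
      ((l + k).choose k : ℝ) * (g * y) ^ l)) (a := g ^ (n : ℕ) * (1 / (1 - g * x) ^ (k + 1) -
      1 / (1 - g * y) ^ (k + 1))) (by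
        intro l hl
        have : l = 0 := by
          by_contra h0
          exact hl ⟨⟨l, Nat.pos_of_ne_zero h0⟩, rfl⟩
        subst this
        simp)).2 h
  convert h' using 1
  · ext l
    have e1 : (n : ℕ) + l - 1 = l + k := by omega
    have e2 : (n : ℕ) - 1 = k := by omega
    simp only [Function.comp, e1, e2, mul_pow, pow_add]
    ring
  · rw [hk, mul_pow, mul_pow, one_div_pow, one_div_pow]
    ring

lemma cdtWeight_eq {μ g : ℝ} (hg : g = Real.exp (-μ)) (n l : ℕ+) :
    cdtWeight μ n l = ENNReal.ofReal
      ((((n : ℕ) + (l : ℕ) - 1).choose ((n : ℕ) - 1) : ℝ) * g ^ ((n : ℕ) + (l : ℕ))) := by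
  unfold cdtWeight
  rw [hg, ← Real.exp_nat_mul]
  congr 3
  push_cast
  ring

lemma cdt_moment {μ a g : ℝ} (hgm : g = Real.exp (-μ)) (ha : 0 < a) (ha1 : a < 1)
    (hg : g = a / (1 + a ^ 2)) {c : ℝ} (hc : -1 ≤ c) (hc' : c ≤ a) (k : ℕ) : ∀ n : ℕ+,
    ∑' m : ℕ+, cdtP μ k n m * ENNReal.ofReal (cdtR a c 1 ^ (m : ℕ)) =
      ENNReal.ofReal (cdtR a c ((a ^ 2) ^ k) ^ (n : ℕ) - cdtR a a ((a ^ 2) ^ k) ^ (n : ℕ)) := by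
  have hg0 : 0 < g := hgm ▸ Real.exp_pos _
  have hg1 : g < 1 := by
    rw [hg, div_lt_one (by positivity)]
    nlinarith
  induction k with
  | zero =>
    intro n
    rw [tsum_eq_single n]
    · simp [cdtP, cdtR]
    · intro m hm
      simp [cdtP, hm]
  | succ k ih =>
    intro n
    have hA : 0 < (a ^ 2) ^ k := by positivity
    have hA1 : (a ^ 2) ^ k ≤ 1 := pow_le_one₀ (by positivity) (by nlinarith)
    have hm1 := cdtR_mem ha ha1 hc hc' hA hA1
    have hm2 := cdtR_mem ha ha1 (by linarith) le_rfl hA hA1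
    have hs := cdt_hasSum hg0 hg1 hm1.1 hm1.2 hm2.1 hm2.2 n
    rw [cdtR_step ha ha1 hc hc' hA hA1 hg, cdtR_step ha ha1 (by linarith) le_rfl hA hA1 hg,
      ← pow_succ'] at hs
    have hd : ∀ l : ℕ+, 0 ≤ cdtR a c ((a ^ 2) ^ k) ^ (l : ℕ) - cdtR a a ((a ^ 2) ^ k) ^ (l : ℕ) :=
      fun l => sub_nonneg.2 (pow_le_pow_left₀ hm2.1 (cdtR_anti ha ha1 hc hc' hA hA1) _)
    rw [← hs.tsum_eq, ENNReal.ofReal_tsum_of_nonneg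
      (fun l => mul_nonneg (by positivity) (hd l)) hs.summable]
    simp only [cdtP, ← ENNReal.tsum_mul_right]
    rw [ENNReal.tsum_comm]
    refine tsum_congr fun l => ?_
    simp only [mul_assoc]
    rw [ENNReal.tsum_mul_left, ih l, cdtWeight_eq hgm, ← ENNReal.ofReal_mul (by positivity),
      mul_assoc]

lemma cdt_upper {μ a g : ℝ} (hgm : g = Real.exp (-μ)) (ha : 0 < a) (ha1 : a < 1)
    (hg : g = a / (1 + a ^ 2)) (k : ℕ) (hk : 1 ≤ k) :
    cdtZ (k + 1) μ ≤ ENNReal.ofReal ((1 + a) / (1 - a) ^ 2 * (a ^ 2) ^ k) := by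
  have hg0 : 0 < g := hgm ▸ Real.exp_pos _
  have hg2 : 2 * g ≤ 1 := by
    rw [hg, ← mul_div_assoc, div_le_one (by positivity)]
    nlinarith [sq_nonneg (a - 1)]
  have hw : ∀ m n : ℕ+, cdtWeight μ m n ≤ 1 := by
    intro m n
    rw [cdtWeight_eq hgm, ENNReal.ofReal_le_one]
    calc (((m : ℕ) + (n : ℕ) - 1).choose ((m : ℕ) - 1) : ℝ) * g ^ ((m : ℕ) + (n : ℕ))
        ≤ 2 ^ ((m : ℕ) + (n : ℕ)) * g ^ ((m : ℕ) + (n : ℕ)) := by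
          gcongr
          exact_mod_cast (Nat.choose_le_two_pow _ _).trans
            (Nat.pow_le_pow_right (by norm_num) (Nat.sub_le _ _))
      _ = (2 * g) ^ ((m : ℕ) + (n : ℕ)) := by rw [mul_pow]
      _ ≤ 1 := pow_le_one₀ (by positivity) hg2
  set A := (a ^ 2) ^ k with hAdef
  have hA : 0 < A := by positivity
  have hA2 : A ≤ a ^ 2 := by
    have := pow_le_pow_of_le_one (a := a ^ 2) (by positivity) (by nlinarith) hk
    simpa using this
  have hA1 : A < 1 := by nlinarith
  have hone : cdtR a (-1) 1 = 1 := by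
    unfold cdtR
    rw [div_eq_one_iff_eq] <;> nlinarith
  have hP : ∀ n : ℕ+, ∑' m : ℕ+, cdtP μ k n m * cdtWeight μ m n ≤
      ENNReal.ofReal (cdtR a (-1) A ^ (n : ℕ) - cdtR a a A ^ (n : ℕ)) := by
    intro n
    rw [← cdt_moment hgm ha ha1 hg (c := -1) le_rfl (by linarith) k n, hone]
    refine ENNReal.tsum_le_tsum fun m => ?_
    simp only [one_pow, ENNReal.ofReal_one]
    gcongr
    exact hw m n
  rw [cdtZ_succ]
  refine (ENNReal.tsum_le_tsum hP).trans ?_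
  have hm1 := cdtR_mem ha ha1 (c := -1) le_rfl (by linarith) hA hA1.le
  have hm2 := cdtR_mem ha ha1 (by linarith) le_rfl hA hA1.le
  have hle := cdtR_anti ha ha1 (c := -1) le_rfl (by linarith) hA hA1.le
  have hd1 : 0 < 1 + a * A := by positivity
  have hd2 : 0 < 1 - a ^ 2 * A := by nlinarith
  have e1 : 1 - cdtR a (-1) A = (1 - a) * (1 - A) / (1 + a * A) := by
    have : 1 - -1 * a * A = 1 + a * A := by ring
    unfold cdtR
    rw [this]
    field_simp
    ring
  have e2 : 1 - cdtR a a A = (1 - a) * (1 + a * A) / (1 - a ^ 2 * A) := by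
    have : 1 - a * a * A = 1 - a ^ 2 * A := by ring
    unfold cdtR
    rw [this]
    field_simp
    ring
  have hp1 : 0 < 1 - cdtR a (-1) A := by
    rw [e1]
    exact div_pos (mul_pos (by linarith) (by linarith)) hd1
  have hp2 : 0 < 1 - cdtR a a A := by linarith
  have hs := (hasSum_geometric_of_lt_one hm1.1 (by linarith)).sub
    (hasSum_geometric_of_lt_one hm2.1 (by linarith))
  have hs' := (Function.Injective.hasSum_iff (g := fun l : ℕ+ => (l : ℕ)) PNat.coe_injective
    (by
        intro l hl
        have : l = 0 := by
          by_contra h0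
          exact hl ⟨⟨l, Nat.pos_of_ne_zero h0⟩, rfl⟩
        subst this
        simp)).2 hs
  have ht := ENNReal.ofReal_tsum_of_nonneg (fun l : ℕ+ =>
    sub_nonneg.2 (pow_le_pow_left₀ hm2.1 hle (l : ℕ))) hs'.summable
  refine (le_of_eq ht.symm).trans ?_
  have hte := hs'.tsum_eq
  simp only [Function.comp_def] at hte
  rw [hte]
  apply ENNReal.ofReal_le_ofReal
  rw [e1, e2]
  have hA' : 0 < 1 - A := by linarith
  have ha' : 0 < 1 - a := by linarith
  have e3 : ((1 - a) * (1 - A) / (1 + a * A))⁻¹ - ((1 - a) * (1 + a * A) / (1 - a ^ 2 * A))⁻¹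
      = (1 + a) ^ 2 * A / ((1 - a) * ((1 - A) * (1 + a * A))) := by
    field_simp
    ring
  rw [e3]
  have e4 : (1 + a) / (1 - a) ^ 2 * A = (1 + a) ^ 2 * A / ((1 - a) * (1 - a ^ 2)) := by
    have : 0 < 1 - a ^ 2 := by nlinarith
    field_simp
    ring
  rw [e4]
  apply div_le_div_of_nonneg_left (by positivity) (mul_pos ha' (by nlinarith))
  apply mul_le_mul_of_nonneg_left _ ha'.le
  have : 0 < a * A := by positivity
  nlinarith

lemma cdt_lower {μ a g : ℝ} (hgm : g = Real.exp (-μ)) (ha : 0 < a) (ha1 : a < 1)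
    (hg : g = a / (1 + a ^ 2)) (k : ℕ) :
    ENNReal.ofReal (g * a * (1 - a ^ 2) ^ 2 * (a ^ 2) ^ k) ≤ cdtZ (k + 1) μ := by
  have hg0 : 0 < g := hgm ▸ Real.exp_pos _
  set A := (a ^ 2) ^ k with hAdef
  have hA : 0 < A := by positivity
  have hA1 : A ≤ 1 := pow_le_one₀ (by positivity) (by nlinarith)
  have ha2 : a ^ 2 < 1 := by nlinarith
  have hgR : cdtR a (a ^ 3) 1 = g := by
    have h1 : 0 < 1 - a ^ 3 * a * 1 := by nlinarith
    rw [hg]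
    unfold cdtR
    rw [div_eq_div_iff h1.ne' (by positivity)]
    ring
  have hc : a ^ 3 ≤ a := by nlinarith
  have hc0 : -1 ≤ a ^ 3 := by have : 0 < a ^ 3 := by positivity
                              linarith
  rw [cdtZ_succ]
  refine le_trans ?_ (ENNReal.le_tsum (1 : ℕ+))
  have hw : ∀ m : ℕ+, ENNReal.ofReal g * ENNReal.ofReal (g ^ (m : ℕ)) ≤ cdtWeight μ m 1 := by
    intro m
    rw [cdtWeight_eq hgm, ← ENNReal.ofReal_mul hg0.le]
    apply ENNReal.ofReal_le_ofReal
    have : (1 : ℝ) ≤ (((m : ℕ) + ((1 : ℕ+) : ℕ) - 1).choose ((m : ℕ) - 1) : ℝ) := by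
      exact_mod_cast Nat.choose_pos (by simp)
    have h2 : g * g ^ (m : ℕ) = g ^ ((m : ℕ) + ((1 : ℕ+) : ℕ)) := by
      simp [pow_succ']
    rw [h2]
    exact le_mul_of_one_le_left (by positivity) this
  calc ENNReal.ofReal (g * a * (1 - a ^ 2) ^ 2 * A)
      ≤ ENNReal.ofReal (g * (cdtR a (a ^ 3) A ^ ((1 : ℕ+) : ℕ) - cdtR a a A ^ ((1 : ℕ+) : ℕ))) := by
        apply ENNReal.ofReal_le_ofReal
        have hd1 : 0 < 1 - a ^ 3 * a * A := cdt_den ha ha1 hc0 hc hA hA1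
        have hd2 : 0 < 1 - a * a * A := cdt_den ha ha1 (by linarith) le_rfl hA hA1
        have e : cdtR a (a ^ 3) A - cdtR a a A =
            a * A * (1 - a ^ 2) ^ 2 / ((1 - a ^ 3 * a * A) * (1 - a * a * A)) := by
          unfold cdtR
          rw [div_sub_div _ _ hd1.ne' hd2.ne']
          congr 1
          ring
        simp only [PNat.one_coe, pow_one]
        rw [e]
        have hpos : 0 ≤ a * A * (1 - a ^ 2) ^ 2 := by positivity
        have hle : a * A * (1 - a ^ 2) ^ 2 ≤
            a * A * (1 - a ^ 2) ^ 2 / ((1 - a ^ 3 * a * A) * (1 - a * a * A)) := by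
          apply le_div_self hpos (mul_pos hd1 hd2)
          apply mul_le_one₀ _ hd2.le _
          · have : 0 < a ^ 3 * a * A := by positivity
            linarith
          · have : 0 < a * a * A := by positivity
            linarith
        calc g * a * (1 - a ^ 2) ^ 2 * A = g * (a * A * (1 - a ^ 2) ^ 2) := by ring
          _ ≤ _ := mul_le_mul_of_nonneg_left hle hg0.le
    _ = ∑' m : ℕ+, cdtP μ k 1 m * (ENNReal.ofReal g * ENNReal.ofReal (g ^ (m : ℕ))) := by
        rw [ENNReal.ofReal_mul hg0.le, ← cdt_moment hgm ha ha1 hg hc0 hc k 1, hgR,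
          ← ENNReal.tsum_mul_left]
        refine tsum_congr fun m => ?_
        ring
    _ ≤ _ := by
        refine ENNReal.tsum_le_tsum fun m => ?_
        gcongr
        exact hw m

lemma cdt_log_lim {c L : ℝ} (hc : 0 < c) (hL : 0 < L) :
    Filter.Tendsto (fun k : ℕ => Real.log (c * L ^ k) / ((k + 1 : ℕ) : ℝ))
      Filter.atTop (nhds (Real.log L)) := by
  have h : (fun k : ℕ => Real.log (c * L ^ k) / ((k + 1 : ℕ) : ℝ)) =
      fun k : ℕ => Real.log L + (Real.log c - Real.log L) * (1 / ((k : ℝ) + 1)) := by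
    ext k
    rw [Real.log_mul hc.ne' (by positivity), Real.log_pow]
    have : (k : ℝ) + 1 ≠ 0 := by positivity
    push_cast
    field_simp
    ring
  rw [h]
  have := (tendsto_one_div_add_atTop_nhds_zero_nat (𝕜 := ℝ)).const_mul (Real.log c - Real.log L)
  simpa using this.const_add (Real.log L)

/-- For `μ > ln 2`, `(1/N) ln Z_N(μ)` converges to `ln Λ(μ)` as `N → ∞`. -/
theorem cdtZ_free_energy (μ : ℝ) (hμ : Real.log 2 < μ) :
    Filter.Tendsto (fun N : ℕ => Real.log ((cdtZ N μ).toReal) / N)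
      Filter.atTop (nhds (Real.log (cdtLambda μ))) := by
  obtain ⟨g, hgm⟩ : ∃ g, g = Real.exp (-μ) := ⟨_, rfl⟩
  have hg0 : 0 < g := hgm ▸ Real.exp_pos _
  have hg2 : 2 * g < 1 := by
    have h : Real.exp (-μ) < 2⁻¹ := by
      rw [← Real.exp_log (by norm_num : (0 : ℝ) < 2⁻¹), Real.log_inv]
      exact Real.exp_lt_exp.2 (by linarith)
    rw [hgm]
    linarith
  have hgg : Real.exp (-2 * μ) = g ^ 2 := by
    rw [hgm, ← Real.exp_nat_mul]
    congr 1
    push_cast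
    ring
  obtain ⟨s, hs⟩ : ∃ s, s = Real.sqrt (1 - 4 * g ^ 2) := ⟨_, rfl⟩
  have hsq : s ^ 2 = 1 - 4 * g ^ 2 := by
    rw [hs, Real.sq_sqrt]
    nlinarith
  have hs0 : 0 ≤ s := hs ▸ Real.sqrt_nonneg _
  have hs1 : s < 1 := by nlinarith
  obtain ⟨a, hadef⟩ : ∃ a, a = (1 - s) / (2 * g) := ⟨_, rfl⟩
  have ha : 0 < a := by
    rw [hadef]
    exact div_pos (by linarith) (by linarith)
  have ha1 : a < 1 := by
    rw [hadef, div_lt_one (by linarith)]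
    by_contra! hcon
    nlinarith
  have hg : g = a / (1 + a ^ 2) := by
    rw [eq_div_iff (by positivity), hadef]
    field_simp
    nlinarith
  have hL : cdtLambda μ = a ^ 2 := by
    unfold cdtLambda
    rw [hgg, ← hgm, ← hs, ← hadef]
  rw [hL, ← Filter.tendsto_add_atTop_iff_nat 1]
  have hC : 0 < (1 + a) / (1 - a) ^ 2 := by
    have : 0 < 1 - a := by linarith
    positivity
  have hc : 0 < g * a * (1 - a ^ 2) ^ 2 := by
    have : 0 < 1 - a ^ 2 := by nlinarith
    positivity
  refine tendsto_of_tendsto_of_tendsto_of_le_of_le' (cdt_log_lim hc (by positivity))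
    (cdt_log_lim hC (by positivity)) ?_ ?_
  · filter_upwards [Filter.eventually_ge_atTop 1] with k hk
    have h1 := cdt_lower hgm ha ha1 hg k
    have h2 := cdt_upper hgm ha ha1 hg k hk
    have h3 := (ENNReal.ofReal_le_iff_le_toReal (h2.trans_lt ENNReal.ofReal_lt_top).ne).1 h1
    gcongr
  · filter_upwards [Filter.eventually_ge_atTop 1] with k hk
    have h1 := cdt_lower hgm ha ha1 hg k
    have h2 := cdt_upper hgm ha ha1 hg k hk
    have h3 := (ENNReal.ofReal_le_iff_le_toReal (h2.trans_lt ENNReal.ofReal_lt_top).ne).1 h1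
    have h4 := ENNReal.toReal_le_of_le_ofReal (by positivity) h2
    have h5 : 0 < (cdtZ (k + 1) μ).toReal := lt_of_lt_of_le (by positivity) h3
    gcongr
end
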